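/- Let G be a finite nonsolvable group. Then T₂(G) ≥ 5·|G : G'|, where T₂(G) is the sum of the degrees of those complex irreducible characters of G whose degree is strictly greater than 2, and G' is the derived (commutator) subgroup of G. -/

import Mathlib

/-- `χ : G → ℂ` is an irreducible complex character of the group `G`, i.e. the character
of a simple (irreducible) finite-dimensional complex representation of `G`. -/
def IsIrrChar (G : Type) [Group G] (χ : G → ℂ) : Prop :=
  ∃ V : FDRep ℂ G, CategoryTheory.Simple V ∧ χ = V.character

/-- `T(G)`: the sum of the degrees (values at the identity) of the complex irreducible
characters of `G`. -/
noncomputable def charDegreeSum (G : Type) [Group G] : ℝ :=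
  ∑ᶠ χ ∈ {χ : G → ℂ | IsIrrChar G χ}, (χ 1).re

/-- `T₂(G)`: the sum of the degrees of the complex irreducible characters of `G` of degree
strictly greater than `2`. -/
noncomputable def charDegreeSumGtTwo (G : Type) [Group G] : ℝ :=
  ∑ᶠ χ ∈ {χ : G → ℂ | IsIrrChar G χ ∧ 2 < (χ 1).re}, (χ 1).re

namespace DegSum

open Representation

/-- twist of a representation by a linear character -/
noncomputable def twist {G V : Type} [Group G] [AddCommGroup V] [Module ℂ V]
    (ρ : Representation ℂ G V) (μ : G →* ℂˣ) : Representation ℂ G V where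
  toFun g := (μ g : ℂ) • ρ g
  map_one' := by simp
  map_mul' g h := by
    ext v; simp [smul_smul, mul_comm]

lemma twist_apply {G V : Type} [Group G] [AddCommGroup V] [Module ℂ V]
    (ρ : Representation ℂ G V) (μ : G →* ℂˣ) (g : G) (v : V) :
    twist ρ μ g v = (μ g : ℂ) • ρ g v := rfl

lemma twist_char {G V : Type} [Group G] [AddCommGroup V] [Module ℂ V]
    (ρ : Representation ℂ G V) (μ : G →* ℂˣ) (g : G) :
    (twist ρ μ).character g = (μ g : ℂ) * ρ.character g := by
  change LinearMap.trace ℂ V ((μ g : ℂ) • ρ g) = _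
  rw [map_smul]; rfl

lemma norm_one {G V : Type} [Group G] [Fintype G] [AddCommGroup V] [Module ℂ V]
    [FiniteDimensional ℂ V] (ρ : Representation ℂ G V) [IsIrreducible ρ] :
    ∑ g : G, ρ.character g * ρ.character g⁻¹ = Nat.card G := by
  have hc : (Nat.card G : ℂ) ≠ 0 := by simp
  have := invertibleOfNonzero hc
  have h := char_orthonormal ρ ρ
  rw [if_pos ⟨Representation.Equiv.refl ρ⟩, inv_mul_eq_iff_eq_mul₀ hc] at h
  simpa using h

lemma isIrrChar_twist {G V : Type} [Group G] [Finite G] [AddCommGroup V] [Module ℂ V]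
    [FiniteDimensional ℂ V] (ρ : Representation ℂ G V) [IsIrreducible ρ] (μ : G →* ℂˣ) :
    IsIrrChar G (twist ρ μ).character := by
  have := Fintype.ofFinite G
  refine ⟨FDRep.of (twist ρ μ), ?_, rfl⟩
  rw [FDRep.simple_iff_char_is_norm_one, ← norm_one ρ]
  refine Finset.sum_congr rfl fun g _ => ?_
  change (twist ρ μ).character g * (twist ρ μ).character g⁻¹ = _
  rw [twist_char, twist_char, map_inv, Units.val_inv_eq_inv_val]
  have : (μ g : ℂ) ≠ 0 := (μ g).ne_zero
  field_simp

lemma finite_irr (G : Type) [Group G] [Finite G] : {χ : G → ℂ | IsIrrChar G χ}.Finite := by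
  classical
  have := Fintype.ofFinite G
  have hc : (Nat.card G : ℂ) ≠ 0 := by simp
  have := invertibleOfNonzero hc
  have hli : LinearIndependent ℂ (fun χ : {χ : G → ℂ | IsIrrChar G χ} => (χ : G → ℂ)) := by
    rw [linearIndependent_iff']
    intro s c hs χ hχ
    have h1 : ∑ g : G, (∑ i ∈ s, c i • (i : G → ℂ)) g * (χ : G → ℂ) g⁻¹ = 0 := by
      rw [hs]; simp
    have key : ∀ i : {χ : G → ℂ | IsIrrChar G χ},
        ∑ g : G, (i : G → ℂ) g * (χ : G → ℂ) g⁻¹ = if i = χ then (Nat.card G : ℂ) else 0 := by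
      intro i
      obtain ⟨V, hV, hV'⟩ := i.2
      obtain ⟨W, hW, hW'⟩ := χ.2
      have h := FDRep.char_orthonormal V W
      rw [inv_mul_eq_iff_eq_mul₀ hc] at h
      rw [hV', hW', h]
      by_cases hi : i = χ
      · subst hi
        rw [if_pos rfl]
        by_contra hne
        by_cases hn : Nonempty (V ≅ W)
        · rw [if_pos hn] at hne; simp at hne
        · rw [if_neg hn] at h
          have h2 := (FDRep.simple_iff_char_is_norm_one V).1 hV
          rw [← hW', hV', h2] at h
          simp at h
      · rw [if_neg hi, if_neg]
        · simp
        · rintro ⟨e⟩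
          apply hi
          apply Subtype.ext
          rw [hV', hW', FDRep.char_iso e]
    simp only [Finset.sum_apply, Pi.smul_apply, smul_eq_mul, Finset.sum_mul] at h1
    rw [Finset.sum_comm] at h1
    simp only [mul_assoc, ← Finset.mul_sum, key] at h1
    simp [hχ] at h1
    exact h1
  exact hli.setFinite

lemma card_lin (G : Type) [Group G] [Finite G] :
    Nat.card (G →* ℂˣ) = (commutator G).index := by
  have e : (Abelianization G →* ℂˣ) ≃ (G →* ℂˣ) := Abelianization.lift.symm
  rw [← Nat.card_congr e, CommGroup.card_monoidHom_of_hasEnoughRootsOfUnity]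
  rfl

lemma final_count {G V : Type} [Group G] [Finite G] [AddCommGroup V] [Module ℂ V]
    [FiniteDimensional ℂ V] (ρ : Representation ℂ G V) [IsIrreducible ρ] (s : ℕ)
    (h5 : 5 * s ≤ Module.finrank ℂ V)
    (hs : {μ : G →* ℂˣ | (twist ρ μ).character = ρ.character}.ncard ≤ s) :
    5 * ((commutator G).index : ℝ) ≤ charDegreeSumGtTwo G := by
  classical
  have hfin : Finite (G →* ℂˣ) := by
    apply Nat.finite_of_card_ne_zero
    rw [card_lin]
    exact Subgroup.index_ne_zero_of_finite
  have := Fintype.ofFinite (G →* ℂˣ)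
  have hs1 : 1 ≤ s := by
    refine le_trans ?_ hs
    refine (Set.ncard_pos (Set.toFinite _)).2 ?_
    exact ⟨1, by ext g; simp [twist_char]⟩
  let f : (G →* ℂˣ) → (G → ℂ) := fun μ => (twist ρ μ).character
  let I := Finset.univ.image f
  have hcard : Fintype.card (G →* ℂˣ) ≤ s * I.card := by
    refine Finset.card_le_mul_card_image (s := Finset.univ) s ?_
    intro b hb
    obtain ⟨μ₀, -, rfl⟩ := Finset.mem_image.1 hb
    refine le_trans ?_ hs
    rw [← Set.ncard_coe_finset]
    refine Set.ncard_le_ncard_of_injOn (fun μ => μ * μ₀⁻¹) ?_ ?_ (Set.toFinite _)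
    · intro μ hμ
      simp only [Finset.coe_filter, Finset.mem_univ, true_and, Set.mem_ofPred_eq] at hμ ⊢
      ext g
      have h := congrFun hμ g
      simp only [f, twist_char] at h
      have h0 : (μ₀ g : ℂ) ≠ 0 := (μ₀ g).ne_zero
      rw [twist_char]
      simp only [MonoidHom.mul_apply, MonoidHom.inv_apply, Units.val_mul, Units.val_inv_eq_inv_val]
      rw [mul_comm (μ g : ℂ), mul_assoc, h, inv_mul_cancel_left₀ h0]
    · intro a _ b _ hab
      simpa using hab
  have hdeg : ∀ χ ∈ I, (χ 1).re = Module.finrank ℂ V := by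
    intro χ hχ
    obtain ⟨μ, -, rfl⟩ := Finset.mem_image.1 hχ
    simp [f]
  have hfinS : {χ : G → ℂ | IsIrrChar G χ ∧ 2 < (χ 1).re}.Finite :=
    (finite_irr G).subset fun χ h => h.1
  have hsub : I ⊆ hfinS.toFinset := by
    intro χ hχ
    have hd := hdeg χ hχ
    simp only [Set.Finite.mem_toFinset, Set.mem_ofPred_eq]
    refine ⟨?_, ?_⟩
    · obtain ⟨μ, -, rfl⟩ := Finset.mem_image.1 hχ
      exact isIrrChar_twist ρ μ
    · rw [hd]
      have : 2 < Module.finrank ℂ V := by omega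
      exact_mod_cast this
  unfold charDegreeSumGtTwo
  rw [finsum_mem_eq_finite_toFinset_sum _ hfinS]
  have h1 : ∑ χ ∈ I, (χ 1).re ≤ ∑ χ ∈ hfinS.toFinset, (χ 1).re := by
    refine Finset.sum_le_sum_of_subset_of_nonneg hsub ?_
    intro χ hχ _
    have := ((Set.Finite.mem_toFinset hfinS).1 hχ).2
    linarith
  refine le_trans ?_ h1
  rw [Finset.sum_congr rfl hdeg, Finset.sum_const, nsmul_eq_mul, ← card_lin,
    Nat.card_eq_fintype_card]
  have : 5 * Fintype.card (G →* ℂˣ) ≤ I.card * Module.finrank ℂ V := by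
    calc 5 * Fintype.card (G →* ℂˣ) ≤ 5 * (s * I.card) := by omega
      _ = I.card * (5 * s) := by ring
      _ ≤ _ := Nat.mul_le_mul_left _ h5
  exact_mod_cast this


end DegSum

namespace DegSum

open Representation

lemma complemented {G V : Type} [Group G] [Finite G] [AddCommGroup V] [Module ℂ V]
    (ρ : Representation ℂ G V) : ComplementedLattice (Subrepresentation ρ) := by
  have h : (Nat.card G : ℂ) ≠ 0 := Nat.cast_ne_zero.2 Nat.card_pos.ne'
  have := NeZero.mk h
  infer_instance

lemma exists_irr {G V : Type} [Group G] [Finite G] [AddCommGroup V] [Module ℂ V]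
    [FiniteDimensional ℂ V] (ρ : Representation ℂ G V) (F : Submodule ℂ V) (n : ℕ) :
    ∀ W : Subrepresentation ρ, Module.finrank ℂ W.toSubmodule = n → W ≠ ⊥ →
      5 * Module.finrank ℂ (W.toSubmodule ⊓ F : Submodule ℂ V) ≤ Module.finrank ℂ W.toSubmodule →
      ∃ U : Subrepresentation ρ, U ≤ W ∧ U ≠ ⊥ ∧
        5 * Module.finrank ℂ (U.toSubmodule ⊓ F : Submodule ℂ V)
          ≤ Module.finrank ℂ U.toSubmodule ∧
        ∀ U' : Subrepresentation ρ, U' ≤ U → U' = ⊥ ∨ U' = U := by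
  induction n using Nat.strong_induction_on with
  | _ n ih =>
  intro W hn hW h5
  by_cases hirr : ∀ U' : Subrepresentation ρ, U' ≤ W → U' = ⊥ ∨ U' = W
  · exact ⟨W, le_rfl, hW, h5, hirr⟩
  push Not at hirr
  obtain ⟨A, hAW, hA0, hA1⟩ := hirr
  have := complemented ρ
  obtain ⟨C, hC⟩ := exists_isCompl A
  let B := W ⊓ C
  have hBW : B ≤ W := inf_le_left
  have hdisj : A.toSubmodule ⊓ B.toSubmodule = ⊥ := by
    have h1 : A ⊓ B ≤ A ⊓ C := inf_le_inf_left _ inf_le_right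
    rw [hC.inf_eq_bot, le_bot_iff] at h1
    exact congrArg Subrepresentation.toSubmodule h1
  have hsup : A.toSubmodule ⊔ B.toSubmodule = W.toSubmodule := by
    have h2 : A.toSubmodule ⊔ C.toSubmodule = ⊤ :=
      congrArg Subrepresentation.toSubmodule hC.sup_eq_top
    change A.toSubmodule ⊔ (W.toSubmodule ⊓ C.toSubmodule) = _
    rw [inf_comm, ← sup_inf_assoc_of_le _ (show A.toSubmodule ≤ W.toSubmodule from hAW), h2,
      top_inf_eq]
  have hd := Submodule.finrank_sup_add_finrank_inf_eq A.toSubmodule B.toSubmodule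
  rw [hdisj, hsup, finrank_bot] at hd
  have hA0' : 0 < Module.finrank ℂ A.toSubmodule := by
    rw [Module.finrank_pos_iff, Submodule.nontrivial_iff_ne_bot]
    exact fun h => hA0 (Subrepresentation.toSubmodule_injective h)
  have hB0 : B ≠ ⊥ := by
    intro h
    apply hA1
    apply Subrepresentation.toSubmodule_injective
    rw [← hsup, h]
    exact (sup_bot_eq _).symm
  have hB0' : 0 < Module.finrank ℂ B.toSubmodule := by
    rw [Module.finrank_pos_iff, Submodule.nontrivial_iff_ne_bot]
    exact fun h => hB0 (Subrepresentation.toSubmodule_injective h)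
  have hF : Module.finrank ℂ (A.toSubmodule ⊓ F : Submodule ℂ V) +
      Module.finrank ℂ (B.toSubmodule ⊓ F : Submodule ℂ V) ≤
      Module.finrank ℂ (W.toSubmodule ⊓ F : Submodule ℂ V) := by
    have h := Submodule.finrank_sup_add_finrank_inf_eq (A.toSubmodule ⊓ F) (B.toSubmodule ⊓ F)
    rw [← h]
    have h0 : (A.toSubmodule ⊓ F) ⊓ (B.toSubmodule ⊓ F) = ⊥ := by
      rw [eq_bot_iff, ← hdisj]
      exact inf_le_inf inf_le_left inf_le_left
    rw [h0, finrank_bot, add_zero]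
    apply Submodule.finrank_mono
    exact sup_le (inf_le_inf_right _ hAW) (inf_le_inf_right _ hBW)
  by_cases hcase : 5 * Module.finrank ℂ (A.toSubmodule ⊓ F : Submodule ℂ V) ≤
      Module.finrank ℂ A.toSubmodule
  · obtain ⟨U, hU, h⟩ := ih _ (by omega) A rfl hA0 hcase
    exact ⟨U, hU.trans hAW, h⟩
  · obtain ⟨U, hU, h⟩ := ih _ (by omega) B rfl hB0 (by omega)
    exact ⟨U, hU.trans hBW, h⟩

lemma irr_toRep {G V : Type} [Group G] [AddCommGroup V] [Module ℂ V]
    (ρ : Representation ℂ G V) (U : Subrepresentation ρ) (h0 : U ≠ ⊥)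
    (h : ∀ U' : Subrepresentation ρ, U' ≤ U → U' = ⊥ ∨ U' = U) :
    IsIrreducible U.toRepresentation where
  exists_pair_ne := by
    refine ⟨⊥, ⊤, fun hbt => h0 ?_⟩
    have h1 : (⊥ : Submodule ℂ U.toSubmodule) = ⊤ := congrArg Subrepresentation.toSubmodule hbt
    apply Subrepresentation.toSubmodule_injective
    rw [← Submodule.map_subtype_top U.toSubmodule, ← h1, Submodule.map_bot]
    rfl
  eq_bot_or_eq_top := by
    intro A
    let A' : Subrepresentation ρ := ⟨A.toSubmodule.map U.toSubmodule.subtype, by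
      rintro g _ ⟨x, hx, rfl⟩
      exact ⟨U.toRepresentation g x, A.apply_mem_toSubmodule g hx, rfl⟩⟩
    have hA' : A' ≤ U := by
      rintro _ ⟨x, hx, rfl⟩
      exact x.2
    have hinj := Submodule.map_injective_of_injective U.toSubmodule.injective_subtype
    rcases h A' hA' with h1 | h1
    · left
      apply Subrepresentation.toSubmodule_injective
      apply hinj
      have h2 : A'.toSubmodule = ⊥ := congrArg Subrepresentation.toSubmodule h1
      change A'.toSubmodule = Submodule.map _ ⊥
      rw [h2, Submodule.map_bot]
    · right
      apply Subrepresentation.toSubmodule_injective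
      apply hinj
      have h2 : A'.toSubmodule = U.toSubmodule := congrArg Subrepresentation.toSubmodule h1
      change A'.toSubmodule = Submodule.map _ ⊤
      rw [h2, Submodule.map_subtype_top]

/-- vectors fixed by a subgroup -/
def fixedBy {G V : Type} [Group G] [AddCommGroup V] [Module ℂ V]
    (ρ : Representation ℂ G V) (P : Subgroup G) : Submodule ℂ V where
  carrier := {v | ∀ g ∈ P, ρ g v = v}
  add_mem' := fun ha hb g hg => by rw [map_add, ha g hg, hb g hg]
  zero_mem' := fun g _ => map_zero _
  smul_mem' := fun c v hv g hg => by rw [map_smul, hv g hg]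

lemma stab_le {G V : Type} [Group G] [Finite G] [AddCommGroup V] [Module ℂ V]
    [FiniteDimensional ℂ V] (ρ : Representation ℂ G V) [IsIrreducible ρ] (X P : Subgroup G)
    (hPX : P ≤ X) (hPK : P ≤ commutator G) (hKX : commutator G ⊔ X = ⊤)
    (v : V) (hv0 : v ≠ 0) (hv : ∀ x ∈ X, ρ x v = v) :
    {μ : G →* ℂˣ | (twist ρ μ).character = ρ.character}.ncard ≤
      Module.finrank ℂ (fixedBy ρ P) := by
  classical
  have := Fintype.ofFinite G
  have hfin : Finite (G →* ℂˣ) := by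
    apply Nat.finite_of_card_ne_zero
    rw [card_lin]
    exact Subgroup.index_ne_zero_of_finite
  have hK : ∀ μ : G →* ℂˣ, ∀ g ∈ commutator G, μ g = 1 := fun μ g hg =>
    Abelianization.commutator_subset_ker μ hg
  have key : ∀ μ : {μ : G →* ℂˣ | (twist ρ μ).character = ρ.character},
      ∃ w : V, w ≠ 0 ∧ ∀ x ∈ X, (μ.1 x : ℂ) • ρ x w = w := by
    rintro ⟨μ, hμ⟩
    have hc : (Nat.card G : ℂ) ≠ 0 := by simp
    have := invertibleOfNonzero hc
    have h1 := card_inv_mul_sum_char_mul_char_eq_finrank ρ (twist ρ μ)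
    have hμ' : (twist ρ μ).character = ρ.character := hμ
    rw [hμ', norm_one, inv_mul_cancel₀ hc] at h1
    have h2 : 0 < Module.finrank ℂ (IntertwiningMap ρ (twist ρ μ)) := by
      have : Module.finrank ℂ (IntertwiningMap ρ (twist ρ μ)) = 1 := by exact_mod_cast h1.symm
      omega
    have h3 : Nontrivial (IntertwiningMap ρ (twist ρ μ)) :=
      Module.nontrivial_of_finrank_pos h2
    obtain ⟨T, hT⟩ := exists_ne (0 : IntertwiningMap ρ (twist ρ μ))
    have hinj := (IsIrreducible.injective_or_eq_zero T).resolve_right hT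
    refine ⟨T v, ?_, ?_⟩
    · intro h
      exact hv0 (hinj (h.trans (map_zero T.toLinearMap).symm))
    · intro x hx
      have h4 := LinearMap.congr_fun (T.isIntertwining' x) v
      change T (ρ x v) = (μ x : ℂ) • ρ x (T v) at h4
      rw [hv x hx] at h4
      exact h4.symm
  choose w hw0 hw using key
  let S := {μ : G →* ℂˣ | (twist ρ μ).character = ρ.character}
  have hwP : ∀ μ : S, w μ ∈ fixedBy ρ P := by
    intro μ g hg
    have h := hw μ g (hPX hg)
    rwa [hK μ.1 g (hPK hg), Units.val_one, one_smul] at h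
  let r : S → (X →* ℂ) := fun μ =>
    (Units.coeHom ℂ).comp ((μ.1⁻¹).comp X.subtype)
  have hr : Function.Injective r := by
    intro μ ν h
    apply Subtype.ext
    have hle : commutator G ⊔ X ≤ MonoidHom.eqLocus μ.1 ν.1 := by
      apply sup_le
      · intro g hg
        change μ.1 g = ν.1 g
        rw [hK _ g hg, hK _ g hg]
      · intro g hg
        have h1 := DFunLike.congr_fun h ⟨g, hg⟩
        change (((μ.1 g)⁻¹ : ℂˣ) : ℂ) = (((ν.1 g)⁻¹ : ℂˣ) : ℂ) at h1
        exact inv_injective (Units.ext h1)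
    rw [hKX] at hle
    ext g
    exact congrArg Units.val (hle (Subgroup.mem_top g))
  have hded := (linearIndependent_monoidHom X ℂ).comp r hr
  have hli : LinearIndependent ℂ (fun μ : S => w μ) := by
    rw [linearIndependent_iff'] at hded ⊢
    intro s c hs μ hμ
    have hex : ∃ φ : Module.Dual ℂ V, φ (w μ) ≠ 0 := by
      by_contra hcon
      push Not at hcon
      exact hw0 μ ((Module.forall_dual_apply_eq_zero_iff ℂ (w μ)).1 hcon)
    obtain ⟨φ, hφ⟩ := hex
    have h1 := hded s (fun ν => c ν * φ (w ν)) ?_ μ hμ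
    · exact (mul_eq_zero.1 h1).resolve_right hφ
    · ext x
      have h2 : φ (ρ (x : G) (∑ i ∈ s, c i • w i)) = 0 := by rw [hs]; simp
      rw [map_sum, map_sum] at h2
      rw [Finset.sum_apply, Pi.zero_apply, ← h2]
      refine Finset.sum_congr rfl fun ν _ => ?_
      have h3 := hw ν x x.2
      have h4 : ρ (x : G) (w ν) = ((ν.1 x : ℂ))⁻¹ • w ν := by
        rw [eq_inv_smul_iff₀ (Units.ne_zero _)]
        exact h3
      rw [map_smul, map_smul, h4, map_smul]
      change c ν * φ (w ν) * (((ν.1 x)⁻¹ : ℂˣ) : ℂ) = c ν * ((ν.1 x : ℂ)⁻¹ * φ (w ν))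
      rw [Units.val_inv_eq_inv_val]
      ring
  have hli' : LinearIndependent ℂ (fun μ : S => (⟨w μ, hwP μ⟩ : fixedBy ρ P)) := by
    apply LinearIndependent.of_comp (fixedBy ρ P).subtype
    exact hli
  have := Fintype.ofFinite S
  have h := hli'.fintype_card_le_finrank
  rw [← Nat.card_eq_fintype_card] at h
  exact h


/-- permutation representation on functions -/
def permRep (G Ω : Type) [Group G] [MulAction G Ω] : Representation ℂ G (Ω → ℂ) where
  toFun g := LinearMap.funLeft ℂ ℂ (fun ω => g⁻¹ • ω)
  map_one' := by ext f ω; simp [LinearMap.funLeft]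
  map_mul' g h := by
    apply LinearMap.ext
    intro f
    funext ω
    change f ((g * h)⁻¹ • ω) = f (h⁻¹ • g⁻¹ • ω)
    rw [mul_inv_rev, mul_smul]

lemma permRep_apply {G Ω : Type} [Group G] [MulAction G Ω] (g : G) (f : Ω → ℂ) (ω : Ω) :
    permRep G Ω g f ω = f (g⁻¹ • ω) := rfl

/-- sum functional -/
noncomputable def sumFun (Ω : Type) [Fintype Ω] : (Ω → ℂ) →ₗ[ℂ] ℂ where
  toFun f := ∑ ω, f ω
  map_add' f g := Finset.sum_add_distrib
  map_smul' c f := by simp [Finset.mul_sum]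

/-- functions of sum zero -/
noncomputable def sumZero (G Ω : Type) [Group G] [MulAction G Ω] [Fintype Ω] :
    Subrepresentation (permRep G Ω) where
  toSubmodule := (sumFun Ω).ker
  apply_mem_toSubmodule g f hf := by
    change ∑ ω, f (g⁻¹ • ω) = 0
    rw [← (show ∑ ω, f ω = 0 from hf)]
    exact Equiv.sum_comp (MulAction.toPerm g⁻¹) f

lemma finrank_sumZero (G Ω : Type) [Group G] [MulAction G Ω] [Fintype Ω] :
    Fintype.card Ω ≤ Module.finrank ℂ (sumZero G Ω).toSubmodule + 1 := by
  have h := (sumFun Ω).finrank_range_add_finrank_ker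
  have h1 : Module.finrank ℂ (sumFun Ω).range ≤ 1 := by
    simpa using Submodule.finrank_le (sumFun Ω).range
  rw [Module.finrank_fintype_fun_eq_card] at h
  change _ ≤ Module.finrank ℂ (sumFun Ω).ker + 1
  omega

lemma finrank_fixed {G Ω : Type} [Group G] [Finite G] [MulAction G Ω] [Fintype Ω]
    (P : Subgroup G) (ω₀ : Ω) (hfix : ∀ g ∈ P, g • ω₀ = ω₀)
    (horb : ∀ ω : Ω, ω ≠ ω₀ → 5 ≤ Nat.card (MulAction.orbit P ω)) :
    5 * Module.finrank ℂ ((sumZero G Ω).toSubmodule ⊓ fixedBy (permRep G Ω) P :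
      Submodule ℂ (Ω → ℂ)) ≤ Module.finrank ℂ (sumZero G Ω).toSubmodule := by
  classical
  let O := MulAction.orbitRel.Quotient P Ω
  let π : Ω → O := fun ω => Quotient.mk _ ω
  have hπ : ∀ a b : Ω, π a = π b → ∃ g ∈ P, g • b = a := by
    intro a b hab
    have h : MulAction.orbitRel P Ω a b := Quotient.exact hab
    obtain ⟨g, hg⟩ := h
    exact ⟨g, g.2, hg⟩
  have hπ' : ∀ ω, ω ≠ ω₀ → π ω ≠ π ω₀ := by
    intro ω hω h
    obtain ⟨g, hg, h⟩ := hπ _ _ h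
    rw [hfix g hg] at h
    exact hω h.symm
  have : Fintype O := Fintype.ofFinite O
  let Q := {o : O // o ≠ π ω₀}
  let M := ((sumZero G Ω).toSubmodule ⊓ fixedBy (permRep G Ω) P : Submodule ℂ (Ω → ℂ))
  let L : (Ω → ℂ) →ₗ[ℂ] (Q → ℂ) := LinearMap.funLeft ℂ ℂ (fun q : Q => q.1.out)
  have hinj : Function.Injective (L ∘ₗ M.subtype) := by
    rw [← LinearMap.ker_eq_bot, LinearMap.ker_eq_bot']
    rintro ⟨f, hf1, hf2⟩ hf
    have hne : ∀ ω, ω ≠ ω₀ → f ω = 0 := by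
      intro ω hω
      have h1 := congrFun hf ⟨π ω, hπ' ω hω⟩
      change f (π ω).out = 0 at h1
      obtain ⟨g, hg, h2⟩ := hπ ω (π ω).out (Quotient.out_eq _).symm
      have h3 := congrFun (hf2 g hg) ω
      rw [permRep_apply, ← h2, inv_smul_smul, h1] at h3
      rw [← h2]; exact h3.symm
    have h0 : f ω₀ = 0 := by
      have h1 : ∑ ω, f ω = 0 := hf1
      rwa [Finset.sum_eq_single ω₀ (fun ω _ hω => hne ω hω) (by simp)] at h1
    apply Subtype.ext
    funext ω
    by_cases hω : ω = ω₀
    · rw [hω]; exact h0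
    · exact hne ω hω
  have h1 : Module.finrank ℂ M ≤ Fintype.card Q := by
    have := LinearMap.finrank_le_finrank_of_injective hinj
    rwa [Module.finrank_fintype_fun_eq_card] at this
  have h2 : 5 * Fintype.card Q ≤ Fintype.card Ω - 1 := by
    have h3 : 5 * (Finset.univ.filter (fun o : O => o ≠ π ω₀)).card ≤
        (Finset.univ.erase ω₀).card := by
      refine Finset.mul_card_image_le_card_of_maps_to (f := π) ?_ 5 ?_
      · intro ω hω
        rw [Finset.mem_filter]
        exact ⟨Finset.mem_univ _, hπ' ω (Finset.ne_of_mem_erase hω)⟩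
      · intro o ho
        have ho' := (Finset.mem_filter.1 ho).2
        have hout : π o.out = o := Quotient.out_eq o
        have hne : o.out ≠ ω₀ := by
          intro h
          rw [h] at hout
          exact ho' hout.symm
        refine (horb _ hne).trans ?_
        change (MulAction.orbit P o.out).ncard ≤ _
        rw [← Set.ncard_coe_finset]
        refine Set.ncard_le_ncard ?_ (Set.toFinite _)
        rintro _ ⟨g, rfl⟩
        have h4 : π (g • o.out) = o := by
          rw [← hout]
          refine Quotient.sound ?_
          rw [hout]
          exact ⟨g, rfl⟩
        rw [Finset.mem_coe, Finset.mem_filter]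
        refine ⟨Finset.mem_erase.2 ⟨?_, Finset.mem_univ _⟩, h4⟩
        intro h5
        change g • o.out = ω₀ at h5
        rw [h5] at h4
        exact ho' h4.symm
    rw [Finset.card_erase_of_mem (Finset.mem_univ _), Finset.card_univ] at h3
    rw [Fintype.card_subtype]
    exact h3
  have h3 := finrank_sumZero G Ω
  change 5 * Module.finrank ℂ M ≤ _
  omega

lemma exists_fixed {G Ω : Type} [Group G] [Finite G] [MulAction G Ω] [MulAction.IsPretransitive G Ω]
    (ω₀ : Ω) (U : Subrepresentation (permRep G Ω)) (h0 : U ≠ ⊥) :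
    ∃ v ∈ U.toSubmodule, v ≠ 0 ∧ ∀ x ∈ MulAction.stabilizer G ω₀, permRep G Ω x v = v := by
  classical
  have := Fintype.ofFinite G
  have h0' : U.toSubmodule ≠ ⊥ := fun h => h0 (Subrepresentation.toSubmodule_injective h)
  obtain ⟨f, hfU, hf⟩ := Submodule.exists_mem_ne_zero_of_ne_bot h0'
  obtain ⟨ω₁, hω₁⟩ := Function.ne_iff.1 hf
  obtain ⟨g, hg⟩ := MulAction.exists_smul_eq G ω₁ ω₀
  let X := MulAction.stabilizer G ω₀
  let f' := permRep G Ω g f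
  have hf'U : f' ∈ U.toSubmodule := U.apply_mem_toSubmodule g hfU
  have hf' : f' ω₀ ≠ 0 := by
    change f (g⁻¹ • ω₀) ≠ 0
    rw [← hg, inv_smul_smul]
    exact hω₁
  refine ⟨∑ x : X, permRep G Ω x f', Submodule.sum_mem _ fun x _ =>
    U.apply_mem_toSubmodule _ hf'U, ?_, ?_⟩
  · intro h
    have h1 := congrFun h ω₀
    rw [Finset.sum_apply] at h1
    have h2 : ∀ x : X, permRep G Ω x f' ω₀ = f' ω₀ := by
      intro x
      rw [permRep_apply]
      congr 1
      exact (x⁻¹).2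
    simp only [h2, Finset.sum_const, Pi.zero_apply, nsmul_eq_mul, mul_eq_zero] at h1
    rcases h1 with h1 | h1
    · simp at h1
    · exact hf' h1
  · intro x hx
    rw [map_sum]
    have h1 : ∀ y : X, permRep G Ω x (permRep G Ω y f') =
        permRep G Ω ((⟨x, hx⟩ * y : X) : G) f' := by
      intro y
      change _ = permRep G Ω (x * y) f'
      rw [map_mul]; rfl
    simp only [h1]
    exact Equiv.sum_comp (Equiv.mulLeft (⟨x, hx⟩ : X)) (fun y : X => permRep G Ω (y : G) f')

theorem lemmaA {G Ω : Type} [Group G] [Finite G] [MulAction G Ω] [Finite Ω]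
    (P : Subgroup G) (ω₀ ω₁ : Ω) (hne : ω₁ ≠ ω₀) (hPK : P ≤ commutator G)
    (hfix : ∀ g ∈ P, g • ω₀ = ω₀)
    (horb : ∀ ω : Ω, ω ≠ ω₀ → 5 ≤ Nat.card (MulAction.orbit P ω))
    (htrans : ∀ ω : Ω, ∃ g ∈ commutator G, g • ω = ω₀) :
    5 * ((commutator G).index : ℝ) ≤ charDegreeSumGtTwo G := by
  have := Fintype.ofFinite Ω
  have hpre : MulAction.IsPretransitive G Ω := by
    constructor
    intro a b
    obtain ⟨g, -, hg⟩ := htrans a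
    obtain ⟨h, -, hh⟩ := htrans b
    refine ⟨h⁻¹ * g, ?_⟩
    rw [mul_smul, hg, ← hh, inv_smul_smul]
  have hKX : commutator G ⊔ MulAction.stabilizer G ω₀ = ⊤ := by
    rw [eq_top_iff]
    intro g _
    obtain ⟨k, hk, hkg⟩ := htrans (g • ω₀)
    have h1 : k * g ∈ MulAction.stabilizer G ω₀ := by
      rw [MulAction.mem_stabilizer_iff, mul_smul, hkg]
    have h2 : g = k⁻¹ * (k * g) := by group
    rw [h2]
    exact Subgroup.mul_mem_sup (inv_mem hk) h1
  have hW0 : sumZero G Ω ≠ ⊥ := by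
    intro h
    have h1 := finrank_sumZero G Ω
    have h2 : (sumZero G Ω).toSubmodule = ⊥ := congrArg Subrepresentation.toSubmodule h
    rw [h2, finrank_bot] at h1
    exact hne (Fintype.card_le_one_iff.1 h1 _ _)
  obtain ⟨U, hUW, hU0, hU5, hUirr⟩ := exists_irr (permRep G Ω) (fixedBy (permRep G Ω) P) _
    (sumZero G Ω) rfl hW0 (finrank_fixed P ω₀ hfix horb)
  have := irr_toRep _ U hU0 hUirr
  obtain ⟨v, hvU, hv0, hv⟩ := exists_fixed ω₀ U hU0
  refine final_count U.toRepresentation (Module.finrank ℂ (fixedBy U.toRepresentation P)) ?_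
    (stab_le U.toRepresentation (MulAction.stabilizer G ω₀) P hfix hPK hKX ⟨v, hvU⟩
      (fun h => hv0 (congrArg Subtype.val h)) (fun x hx => Subtype.ext (hv x hx)))
  refine le_trans (le_of_eq ?_) hU5
  congr 1
  rw [← Submodule.map_comap_subtype, Submodule.finrank_map_subtype_eq]
  have : fixedBy U.toRepresentation P = Submodule.comap U.toSubmodule.subtype
      (fixedBy (permRep G Ω) P) := by
    ext x
    constructor
    · intro h g hg
      exact congrArg Subtype.val (h g hg)
    · intro h g hg
      exact Subtype.ext (h g hg)
  rw [this]

end DegSum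


namespace DegSum

theorem sylow_step {G : Type} [Group G] [Finite G] (p : ℕ) [hp : Fact p.Prime] (h5 : 5 ≤ p)
    (P : Sylow p (commutator G)) (hP : ¬ (P : Subgroup (commutator G)).Normal) :
    5 * ((commutator G).index : ℝ) ≤ charDegreeSumGtTwo G := by
  have hconj : ∀ (k : commutator G) (Q : Sylow p (commutator G)),
      (MulAut.conjNormal (k : G) : MulAut (commutator G)) • Q = k • Q := by
    intro k Q
    rw [Sylow.smul_def, ← MulAut.conjNormal_val]
  have hex : ∃ Q : Sylow p (commutator G), Q ≠ P := by
    by_contra hcon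
    push Not at hcon
    have : Subsingleton (Sylow p (commutator G)) := ⟨fun a b => (hcon a).trans (hcon b).symm⟩
    exact hP (Sylow.normal_of_subsingleton P)
  obtain ⟨Q₁, hQ₁⟩ := hex
  have hfix0 : ∀ x ∈ (P : Subgroup (commutator G)),
      (MulAut.conjNormal (x : G) : MulAut (commutator G)) • P = P := by
    intro x hx
    rw [hconj, Sylow.smul_eq_iff_mem_normalizer]
    exact Subgroup.le_normalizer hx
  have horb0 : ∀ Q : Sylow p (commutator G), Q ≠ P →
      5 ≤ Nat.card {R : Sylow p (commutator G) | ∃ x ∈ (P : Subgroup (commutator G)),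
        (MulAut.conjNormal (x : G) : MulAut (commutator G)) • Q = R} := by
    intro Q hQ
    have horb : {R : Sylow p (commutator G) | ∃ x ∈ (P : Subgroup (commutator G)),
        (MulAut.conjNormal (x : G) : MulAut (commutator G)) • Q = R} =
        MulAction.orbit (P : Subgroup (commutator G)) Q := by
      ext R
      constructor
      · rintro ⟨x, hx, rfl⟩
        exact ⟨⟨x, hx⟩, (hconj x Q).symm⟩
      · rintro ⟨⟨x, hx⟩, rfl⟩
        exact ⟨x, hx, hconj x Q⟩
    rw [horb]
    obtain ⟨n, hn⟩ := IsPGroup.card_orbit P.isPGroup' Q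
    rw [hn]
    rcases Nat.eq_zero_or_pos n with h0 | h0
    · exfalso
      rw [h0, pow_zero] at hn
      have hfix : Q ∈ MulAction.fixedPoints (P : Subgroup (commutator G))
          (Sylow p (commutator G)) := by
        intro x
        obtain ⟨hss, -⟩ := Nat.card_eq_one_iff_unique.1 hn
        exact congrArg Subtype.val (hss.elim
          (⟨x • Q, MulAction.mem_orbit _ _⟩ : MulAction.orbit (P : Subgroup (commutator G)) Q)
          ⟨Q, MulAction.mem_orbit_self _⟩)
      rw [IsPGroup.sylow_mem_fixedPoints_iff P.isPGroup'] at hfix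
      exact hQ (Sylow.ext (P.is_maximal' Q.isPGroup' hfix))
    · calc 5 ≤ p := h5
        _ = p ^ 1 := (pow_one p).symm
        _ ≤ p ^ n := Nat.pow_le_pow_right (by omega) h0
  have htr0 : ∀ Q : Sylow p (commutator G), ∃ k : commutator G,
      (MulAut.conjNormal (k : G) : MulAut (commutator G)) • Q = P := by
    intro Q
    obtain ⟨k, hk⟩ := MulAction.exists_smul_eq (commutator G) Q P
    exact ⟨k, by rw [hconj]; exact hk⟩
  let act : MulAction G (Sylow p (commutator G)) :=
    MulAction.compHom (Sylow p (commutator G)) (MulAut.conjNormal (H := commutator G))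
  refine lemmaA (Ω := Sylow p (commutator G))
    ((P : Subgroup (commutator G)).map (commutator G).subtype) P Q₁ hQ₁ ?_ ?_ ?_ ?_
  · rintro _ ⟨x, -, rfl⟩
    exact x.2
  · rintro _ ⟨x, hx, rfl⟩
    exact hfix0 x hx
  · intro Q hQ
    refine (horb0 Q hQ).trans (le_of_eq ?_)
    congr 2
    ext R
    constructor
    · rintro ⟨x, hx, rfl⟩
      exact ⟨⟨(x : G), ⟨x, hx, rfl⟩⟩, rfl⟩
    · rintro ⟨⟨_, x, hx, rfl⟩, rfl⟩
      exact ⟨x, hx, rfl⟩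
  · intro Q
    obtain ⟨k, hk⟩ := htr0 Q
    exact ⟨k, k.2, hk⟩

lemma solvable_of_sylow_normal
    (burn : ∀ (K : Type) [Group K] [Finite K],
      (∀ p : ℕ, p.Prime → p ∣ Nat.card K → p = 2 ∨ p = 3) → Group.IsSolvable K) (n : ℕ) :
    ∀ (K : Type) [Group K] [Finite K], Nat.card K = n →
      (∀ (p : ℕ) [Fact p.Prime], 5 ≤ p → ∀ P : Sylow p K, (P : Subgroup K).Normal) →
      Group.IsSolvable K := by
  induction n using Nat.strong_induction_on with
  | _ n ih =>
  intro K _ _ hn hK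
  by_cases hcase : ∀ p : ℕ, p.Prime → p ∣ Nat.card K → p = 2 ∨ p = 3
  · exact burn K hcase
  push Not at hcase
  obtain ⟨p, hp, hdvd, h2, h3⟩ := hcase
  have hfact := Fact.mk hp
  have h5 : 5 ≤ p := by
    by_contra hlt
    have h4 := hp.two_le
    have : p = 4 := by omega
    rw [this] at hp
    exact absurd hp (by norm_num)
  obtain ⟨P⟩ : Nonempty (Sylow p K) := inferInstance
  have hPn := hK p h5 P
  have hsolvP : Group.IsSolvable (P : Subgroup K) := by
    have := P.isPGroup'.isNilpotent
    infer_instance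
  have hPdvd := P.dvd_card_of_dvd_card hdvd
  have hcard := Subgroup.card_eq_card_quotient_mul_card_subgroup (P : Subgroup K)
  have hPpos : 0 < Nat.card (P : Subgroup K) := Nat.card_pos
  have hP1 : p ≤ Nat.card (P : Subgroup K) := Nat.le_of_dvd hPpos hPdvd
  have hQpos : 0 < Nat.card (K ⧸ (P : Subgroup K)) := Nat.card_pos
  have hQ : Group.IsSolvable (K ⧸ (P : Subgroup K)) := by
    refine ih _ ?_ (K ⧸ (P : Subgroup K)) rfl ?_
    · rw [← hn, hcard]
      nlinarith
    · intro q hq hq5 R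
      have hsurj := QuotientGroup.mk'_surjective (P : Subgroup K)
      obtain ⟨S, rfl⟩ := Sylow.mapSurjective_surjective hsurj q R
      rw [Sylow.coe_mapSurjective]
      exact (hK q hq5 S).map _ hsurj
  refine Group.isSolvable_of_ker_le_range (P : Subgroup K).subtype (QuotientGroup.mk' (P : Subgroup K)) ?_
  rw [QuotientGroup.ker_mk', Subgroup.range_subtype]

theorem main_of_burnside
    (burn : ∀ (K : Type) [Group K] [Finite K],
      (∀ p : ℕ, p.Prime → p ∣ Nat.card K → p = 2 ∨ p = 3) → Group.IsSolvable K)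
    (G : Type) [Group G] [Finite G] (hG : ¬ Group.IsSolvable G) :
    5 * ((commutator G).index : ℝ) ≤ charDegreeSumGtTwo G := by
  by_contra hcon
  apply hG
  have hK : Group.IsSolvable (commutator G) := by
    refine solvable_of_sylow_normal burn _ (commutator G) rfl ?_
    intro p _ h5 P
    by_contra hP
    exact hcon (sylow_step p h5 P hP)
  refine Group.isSolvable_of_ker_le_range (commutator G).subtype (Abelianization.of (G := G)) ?_
  rw [Abelianization.ker_of, Subgroup.range_subtype]

end DegSum


namespace DegSum

open Representation

lemma unit_sum_alg (R : Multiset ℂ) (N : ℕ) (hN : N ≠ 0) (hR : ∀ r ∈ R, r ^ N = 1)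
    (hd : 0 < R.card) (hInteg : IsIntegral ℤ (R.sum / R.card)) :
    R.sum = 0 ∨ ∀ r ∈ R, r = R.sum / R.card := by
  by_cases h0 : R.sum = 0
  · exact Or.inl h0
  right
  have hdC : (R.card : ℂ) ≠ 0 := Nat.cast_ne_zero.2 hd.ne'
  have hnorm : ‖R.sum / R.card‖ = 1 := by
    have hζ := Complex.isPrimitiveRoot_exp N hN
    set ζ := Complex.exp (2 * Real.pi * Complex.I / N) with hζdef
    have hζint : IsIntegral ℚ ζ := by
      refine IsIntegral.of_pow (Nat.pos_of_ne_zero hN) ?_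
      rw [hζ.pow_eq_one]
      exact isIntegral_one
    have hfd : FiniteDimensional ℚ (IntermediateField.adjoin ℚ {ζ}) :=
      IntermediateField.adjoin.finiteDimensional hζint
    have hnf : NumberField (IntermediateField.adjoin ℚ {ζ}) := { to_charZero := inferInstance, to_finiteDimensional := hfd }
    have hmem : ∀ r ∈ R, r ∈ IntermediateField.adjoin ℚ {ζ} := by
      intro r hr
      have : NeZero N := ⟨hN⟩
      obtain ⟨i, -, rfl⟩ := hζ.eq_pow_of_pow_eq_one (hR r hr)
      exact pow_mem (IntermediateField.mem_adjoin_simple_self ℚ ζ) i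
    obtain ⟨R', hR'⟩ : ∃ R' : Multiset (IntermediateField.adjoin ℚ {ζ}),
        R'.map (algebraMap (IntermediateField.adjoin ℚ {ζ}) ℂ) = R := by
      refine ⟨R.attach.map (fun x => ⟨x.1, hmem x.1 x.2⟩), ?_⟩
      rw [Multiset.map_map]
      exact Multiset.attach_map_val R
    let x : IntermediateField.adjoin ℚ {ζ} := R'.sum / R.card
    have hx : algebraMap (IntermediateField.adjoin ℚ {ζ}) ℂ x = R.sum / R.card := by
      rw [map_div₀, map_natCast, map_multiset_sum, hR']
    have hcard : R'.card = R.card := by rw [← hR', Multiset.card_map]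
    have hex : ∃ n : ℕ, ∃ _ : 0 < n, x ^ n = 1 := by
      refine NumberField.Embeddings.pow_eq_one_of_norm_le_one
        (IntermediateField.adjoin ℚ {ζ}) ℂ (x := x) ?_ ?_ ?_
      · intro hx0
        rw [hx0, map_zero] at hx
        exact h0 ((div_eq_zero_iff.1 hx.symm).resolve_right hdC)
      · rw [← hx] at hInteg
        exact (isIntegral_algebraMap_iff (algebraMap (IntermediateField.adjoin ℚ {ζ}) ℂ).injective).1 hInteg
      · intro φ
        have h1 : φ x = (R'.map φ).sum / R.card := by
          rw [map_div₀, map_natCast, map_multiset_sum]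
        rw [h1, norm_div, Complex.norm_natCast, div_le_one (by exact_mod_cast hd)]
        refine (norm_multiset_sum_le _).trans ?_
        rw [Multiset.map_map]
        have h2 : ∀ r ∈ R', ((fun y : ℂ => ‖y‖) ∘ φ) r = 1 := by
          intro r hr
          have h3 : algebraMap (IntermediateField.adjoin ℚ {ζ}) ℂ r ∈ R := by
            rw [← hR']; exact Multiset.mem_map_of_mem _ hr
          have h4 := hR _ h3
          rw [← map_pow] at h4
          have h5 : r ^ N = 1 :=
            (algebraMap (IntermediateField.adjoin ℚ {ζ}) ℂ).injective (h4.trans (map_one _).symm)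
          refine Complex.norm_eq_one_of_pow_eq_one (ζ := φ r) ?_ hN
          rw [← map_pow, h5, map_one]
        rw [Multiset.map_congr rfl h2, Multiset.map_const', Multiset.sum_replicate, hcard]
        simp
    obtain ⟨n, hn, hxn⟩ := hex
    have h1 : (R.sum / R.card) ^ n = 1 := by rw [← hx, ← map_pow, hxn, map_one]
    exact Complex.norm_eq_one_of_pow_eq_one h1 hn.ne'
  set α := R.sum / R.card with hα
  have hsum : R.sum = R.card * α := by rw [hα]; field_simp
  have hrn : ∀ r ∈ R, ‖r‖ = 1 := fun r hr => Complex.norm_eq_one_of_pow_eq_one (hR r hr) hN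
  have hle : ∀ r ∈ R, (r * starRingEnd ℂ α).re ≤ 1 := by
    intro r hr
    refine (Complex.re_le_norm _).trans ?_
    rw [norm_mul, RCLike.norm_conj, hnorm, hrn r hr, one_mul]
  have hαα : α * starRingEnd ℂ α = 1 := by
    rw [Complex.mul_conj, Complex.normSq_eq_norm_sq, hnorm]; simp
  have htot : (R.map (fun r => (r * starRingEnd ℂ α).re)).sum = R.card := by
    have h1 : (R.map (fun r => r * starRingEnd ℂ α)).sum = R.card := by
      rw [Multiset.sum_map_mul_right, Multiset.map_id', hsum, mul_assoc, hαα, mul_one]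
    have h2 := congrArg Complex.reAddGroupHom h1
    rw [map_multiset_sum, Multiset.map_map] at h2
    simpa using h2
  intro r hr
  have hre : (r * starRingEnd ℂ α).re = 1 := by
    by_contra hne
    have hlt : (r * starRingEnd ℂ α).re < 1 := lt_of_le_of_ne (hle r hr) hne
    have h1 : (R.map (fun r => (r * starRingEnd ℂ α).re)).sum < (R.map (fun _ => (1 : ℝ))).sum :=
      Multiset.sum_lt_sum hle ⟨r, hr, hlt⟩
    rw [htot] at h1
    simp at h1
  have hone : r * starRingEnd ℂ α = 1 := by
    have h1 : ‖r * starRingEnd ℂ α‖ = 1 := by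
      rw [norm_mul, RCLike.norm_conj, hnorm, hrn r hr, one_mul]
    have h2 := Complex.sq_norm (r * starRingEnd ℂ α)
    rw [h1, Complex.normSq_apply, hre] at h2
    apply Complex.ext
    · simpa using hre
    · have h3 : (r * starRingEnd ℂ α).im * (r * starRingEnd ℂ α).im = 0 := by linarith
      simpa using mul_self_eq_zero.1 h3
  calc r = r * (α * starRingEnd ℂ α) := by rw [hαα, mul_one]
    _ = (r * starRingEnd ℂ α) * α := by ring
    _ = α := by rw [hone, one_mul]

lemma eigen_pow {G V : Type} [Group G] [Finite G] [AddCommGroup V] [Module ℂ V]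
    [FiniteDimensional ℂ V] (ρ : Representation ℂ G V) (z : G) (r : ℂ)
    (hr : r ∈ (ρ z).charpoly.roots) : r ^ Nat.card G = 1 := by
  have h1 := Polynomial.isRoot_of_mem_roots hr
  rw [← Module.End.hasEigenvalue_iff_isRoot_charpoly] at h1
  obtain ⟨v, hv⟩ := h1.exists_hasEigenvector
  have h2 := hv.pow_apply (Nat.card G)
  rw [← map_pow, pow_card_eq_one', map_one, Module.End.one_apply] at h2
  by_contra hne
  have h3 : (r ^ Nat.card G - 1) • v = 0 := by rw [sub_smul, ← h2, one_smul, sub_self]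
  rcases smul_eq_zero.1 h3 with h | h
  · exact hne (sub_eq_zero.1 h)
  · exact hv.2 h

lemma char_eq_sum {G V : Type} [Group G] [AddCommGroup V] [Module ℂ V]
    [FiniteDimensional ℂ V] (ρ : Representation ℂ G V) (z : G) :
    ρ.character z = (ρ z).charpoly.roots.sum :=
  Module.End.trace_eq_sum_roots_charpoly_of_splits (IsAlgClosed.splits _)

lemma char_integral {G V : Type} [Group G] [Finite G] [AddCommGroup V] [Module ℂ V]
    [FiniteDimensional ℂ V] (ρ : Representation ℂ G V) (z : G) :
    IsIntegral ℤ (ρ.character z) := by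
  rw [char_eq_sum]
  refine IsIntegral.multiset_sum fun r hr => ?_
  refine IsIntegral.of_pow (n := Nat.card G) Nat.card_pos ?_
  rw [eigen_pow ρ z r hr]
  exact isIntegral_one

lemma scalar_of_eigen {G V : Type} [Group G] [Finite G] [AddCommGroup V] [Module ℂ V]
    [FiniteDimensional ℂ V] (ρ : Representation ℂ G V) (z : G) (α : ℂ)
    (h : ∀ r ∈ (ρ z).charpoly.roots, r = α) : ∀ v, ρ z v = α • v := by
  have hss : Module.End.IsSemisimple (ρ z) := by
    refine Module.End.isSemisimple_of_squarefree_aeval_eq_zero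
      (p := Polynomial.X ^ Nat.card G - 1) ?_ ?_
    · apply Polynomial.Separable.squarefree
      rw [Polynomial.X_pow_sub_one_separable_iff]
      exact Nat.cast_ne_zero.2 Nat.card_pos.ne'
    · rw [map_sub, map_pow, Polynomial.aeval_X, map_one, ← map_pow, pow_card_eq_one', map_one,
        sub_self]
  have htop := hss.iSup_eigenspace_eq_top
  have hα : Module.End.eigenspace (ρ z) α = ⊤ := by
    rw [← htop]
    refine le_antisymm (le_iSup _ α) (iSup_le fun μ => ?_)
    by_cases hμ : μ = α
    · rw [hμ]
    · have : Module.End.eigenspace (ρ z) μ = ⊥ := by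
        by_contra hne
        have h1 : Module.End.HasEigenvalue (ρ z) μ := Module.End.hasEigenvalue_iff.2 hne
        rw [Module.End.hasEigenvalue_iff_isRoot_charpoly] at h1
        exact hμ (h μ ((Polynomial.mem_roots (LinearMap.charpoly_monic _).ne_zero).2 h1))
      rw [this]; exact bot_le
  intro v
  have : v ∈ Module.End.eigenspace (ρ z) α := by rw [hα]; trivial
  exact Module.End.mem_eigenspace_iff.1 this

lemma class_integral {G V : Type} [Group G] [Finite G] [AddCommGroup V] [Module ℂ V]
    [FiniteDimensional ℂ V] (ρ : Representation ℂ G V) [IsIrreducible ρ] (z : G) (C : Finset G)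
    (hC : ∀ x, x ∈ C ↔ IsConj z x) :
    ∃ ω : ℂ, IsIntegral ℤ ω ∧ ω * Module.finrank ℂ V = C.card * ρ.character z := by
  classical
  let T : Module.End ℂ V := ∑ x ∈ C, ρ x
  have hcomm : ∀ g : G, T ∘ₗ ρ g = ρ g ∘ₗ T := by
    intro g
    change T * ρ g = ρ g * T
    simp only [T, Finset.sum_mul, Finset.mul_sum, ← map_mul]
    refine Finset.sum_bij' (fun x _ => g⁻¹ * x * g) (fun x _ => g * x * g⁻¹) ?_ ?_ ?_ ?_ ?_
    · intro x hx
      rw [hC] at hx ⊢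
      exact hx.trans (isConj_iff.2 ⟨g⁻¹, by group⟩)
    · intro x hx
      rw [hC] at hx ⊢
      exact hx.trans (isConj_iff.2 ⟨g, by group⟩)
    · intro x _; group
    · intro x _; group
    · intro x _; congr 1; group
  let T' : IntertwiningMap ρ ρ := ⟨T, hcomm⟩
  obtain ⟨ω, hω⟩ :=
    (IsIrreducible.algebraMap_intertwiningMap_bijective_of_isAlgClosed (ρ := ρ)).2 T'
  have hTω : T = algebraMap ℂ (Module.End ℂ V) ω := by
    have h := congrArg IntertwiningMap.toLinearMap hω
    exact h.symm
  have hntV : Nontrivial V := by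
    by_contra hcon
    rw [not_nontrivial_iff_subsingleton] at hcon
    obtain ⟨a, b, hab⟩ := exists_pair_ne (Subrepresentation ρ)
    apply hab
    apply Subrepresentation.toSubmodule_injective
    exact Subsingleton.elim _ _
  refine ⟨ω, ?_, ?_⟩
  · have h1 : IsIntegral ℤ (∑ x ∈ C, MonoidAlgebra.single x (1 : ℤ)) := IsIntegral.of_finite ℤ _
    have h2 := h1.map (MonoidAlgebra.lift ℤ (Module.End ℂ V) G ρ)
    have h3 : MonoidAlgebra.lift ℤ (Module.End ℂ V) G ρ (∑ x ∈ C, MonoidAlgebra.single x (1 : ℤ))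
        = T := by
      rw [map_sum]
      refine Finset.sum_congr rfl fun x _ => ?_
      rw [MonoidAlgebra.lift_single, one_smul]
    rw [h3, hTω] at h2
    exact (isIntegral_algebraMap_iff (FaithfulSMul.algebraMap_injective ℂ (Module.End ℂ V))).1 h2
  · have h1 : LinearMap.trace ℂ V T = C.card * ρ.character z := by
      rw [map_sum]
      rw [Finset.sum_congr rfl (g := fun _ => ρ.character z), Finset.sum_const, nsmul_eq_mul]
      intro x hx
      obtain ⟨g, hg⟩ := isConj_iff.1 ((hC x).1 hx)
      change ρ.character x = _
      rw [← hg, char_conj]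
    rw [← h1, hTω, Algebra.algebraMap_eq_smul_one, map_smul, LinearMap.trace_one, smul_eq_mul]

lemma zero_or_scalar {G V : Type} [Group G] [Finite G] [AddCommGroup V] [Module ℂ V]
    [FiniteDimensional ℂ V] (ρ : Representation ℂ G V) [IsIrreducible ρ] (z : G) (C : Finset G)
    (hC : ∀ x, x ∈ C ↔ IsConj z x) (hcop : Nat.Coprime C.card (Module.finrank ℂ V))
    (hd : 0 < Module.finrank ℂ V) :
    ρ.character z = 0 ∨ ∃ α : ℂ, ∀ v, ρ z v = α • v := by
  obtain ⟨ω, hω, hωd⟩ := class_integral ρ z C hC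
  have hdC : (Module.finrank ℂ V : ℂ) ≠ 0 := Nat.cast_ne_zero.2 hd.ne'
  have hcard : (ρ z).charpoly.roots.card = Module.finrank ℂ V := by
    rw [← LinearMap.charpoly_natDegree (ρ z)]
    exact ((IsAlgClosed.splits _).natDegree_eq_card_roots).symm
  have hbez := Nat.gcd_eq_gcd_ab C.card (Module.finrank ℂ V)
  rw [hcop] at hbez
  have hInteg : IsIntegral ℤ (ρ.character z / Module.finrank ℂ V) := by
    set a := Nat.gcdA C.card (Module.finrank ℂ V)
    set b := Nat.gcdB C.card (Module.finrank ℂ V)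
    have hb' : (1 : ℂ) = C.card * (a : ℂ) + Module.finrank ℂ V * (b : ℂ) := by
      exact_mod_cast congrArg (Int.cast (R := ℂ)) hbez
    have h1 : ρ.character z / Module.finrank ℂ V = (a : ℂ) * ω + (b : ℂ) * ρ.character z := by
      rw [div_eq_iff hdC]
      linear_combination (ρ.character z) * hb' - (a : ℂ) * hωd
    rw [h1]
    exact ((isIntegral_algebraMap (R := ℤ) (A := ℂ) (x := a)).mul hω).add
      ((isIntegral_algebraMap (R := ℤ) (A := ℂ) (x := b)).mul (char_integral ρ z))
  rw [char_eq_sum, ← hcard] at hInteg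
  rcases unit_sum_alg _ (Nat.card G) Nat.card_pos.ne' (eigen_pow ρ z) (by omega) hInteg with h | h
  · left; rw [char_eq_sum]; exact h
  · right; exact ⟨_, scalar_of_eigen ρ z _ h⟩

end DegSum


namespace DegSum

open Representation

/-- irreducible characters, via irreducible representations -/
def IrrC (G : Type) [Group G] (χ : G → ℂ) : Prop :=
  ∃ (V : Type) (_ : AddCommGroup V) (_ : Module ℂ V) (_ : FiniteDimensional ℂ V)
    (ρ : Representation ℂ G V), IsIrreducible ρ ∧ χ = ρ.character

lemma irr_orth {G : Type} [Group G] [Fintype G] (χ ψ : G → ℂ) (hχ : IrrC G χ) (hψ : IrrC G ψ) :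
    ∑ g : G, χ g * ψ g⁻¹ = open Classical in if χ = ψ then (Nat.card G : ℂ) else 0 := by
  classical
  obtain ⟨V, _, _, _, ρ, hρ, rfl⟩ := hχ
  obtain ⟨W, _, _, _, σ, hσ, rfl⟩ := hψ
  have hc : (Nat.card G : ℂ) ≠ 0 := Nat.cast_ne_zero.2 Nat.card_pos.ne'
  have := invertibleOfNonzero hc
  split_ifs with heq
  · rw [← heq]
    exact norm_one ρ
  · have h := char_orthonormal ρ σ
    rw [if_neg, inv_mul_eq_iff_eq_mul₀ hc] at h
    · simpa using h
    · rintro ⟨e⟩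
      exact heq (char_iso e).symm

lemma char_add_of_isCompl {G V : Type} [Group G] [AddCommGroup V] [Module ℂ V]
    [FiniteDimensional ℂ V] (ρ : Representation ℂ G V) (A B : Subrepresentation ρ)
    (h : IsCompl A B) :
    ρ.character = A.toRepresentation.character + B.toRepresentation.character := by
  have hc : IsCompl A.toSubmodule B.toSubmodule := by
    rw [isCompl_iff, disjoint_iff, codisjoint_iff]
    exact ⟨congrArg Subrepresentation.toSubmodule h.inf_eq_bot,
      congrArg Subrepresentation.toSubmodule h.sup_eq_top⟩
  funext g
  let e := Submodule.prodEquivOfIsCompl _ _ hc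
  have h1 : ρ g = e.conj (LinearMap.prodMap (A.toRepresentation g) (B.toRepresentation g)) := by
    ext v
    obtain ⟨⟨a, b⟩, rfl⟩ := e.surjective v
    rw [LinearEquiv.conj_apply_apply, LinearEquiv.symm_apply_apply, LinearMap.prodMap_apply]
    simp only [e, Submodule.coe_prodEquivOfIsCompl', map_add]
    rfl
  change LinearMap.trace ℂ V (ρ g) = LinearMap.trace ℂ _ (A.toRepresentation g) +
    LinearMap.trace ℂ _ (B.toRepresentation g)
  rw [h1, LinearMap.trace_conj', LinearMap.trace_prodMap']

lemma decomp {G : Type} [Group G] [Finite G] (n : ℕ) :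
    ∀ (V : Type) [AddCommGroup V] [Module ℂ V] [FiniteDimensional ℂ V]
      (ρ : Representation ℂ G V), Module.finrank ℂ V = n →
      ∃ m : Multiset (G → ℂ), (∀ χ ∈ m, IrrC G χ) ∧ ρ.character = m.sum := by
  induction n using Nat.strong_induction_on with
  | _ n ih =>
  intro V _ _ _ ρ hn
  by_cases hirr : IsIrreducible ρ
  · exact ⟨{ρ.character}, by
      intro χ hχ
      rw [Multiset.mem_singleton.1 hχ]
      exact ⟨V, _, _, inferInstance, ρ, hirr, rfl⟩, by simp⟩
  by_cases hsub : Subsingleton V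
  · refine ⟨0, by simp, ?_⟩
    funext g
    have : ρ g = 0 := LinearMap.ext fun v => Subsingleton.elim _ _
    change LinearMap.trace ℂ V (ρ g) = _
    rw [this]; simp
  rw [not_subsingleton_iff_nontrivial] at hsub
  have hex : ∃ A : Subrepresentation ρ, A ≠ ⊥ ∧ A ≠ ⊤ := by
    by_contra hcon
    push Not at hcon
    apply hirr
    exact { exists_pair_ne := ⟨⊥, ⊤, fun h => by
              have h1 : (⊥ : Submodule ℂ V) = ⊤ := congrArg Subrepresentation.toSubmodule h
              exact bot_ne_top h1⟩
            eq_bot_or_eq_top := fun A => by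
              by_cases hA : A = ⊥
              · exact Or.inl hA
              · exact Or.inr (hcon A hA) }
  obtain ⟨A, hA0, hA1⟩ := hex
  have := complemented ρ
  obtain ⟨B, hAB⟩ := exists_isCompl A
  have hB1 : B ≠ ⊤ := by
    intro h
    have h1 := hAB.inf_eq_bot
    rw [h, inf_top_eq] at h1
    exact hA0 h1
  have hlt : ∀ D : Subrepresentation ρ, D ≠ ⊤ → Module.finrank ℂ D.toSubmodule < n := by
    intro D hD
    rw [← hn]
    apply Submodule.finrank_lt
    intro h
    exact hD (Subrepresentation.toSubmodule_injective h)
  obtain ⟨mA, hmA, hmA'⟩ := ih _ (hlt A hA1) _ A.toRepresentation rfl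
  obtain ⟨mB, hmB, hmB'⟩ := ih _ (hlt B hB1) _ B.toRepresentation rfl
  refine ⟨mA + mB, ?_, ?_⟩
  · intro χ hχ
    rcases Multiset.mem_add.1 hχ with h | h
    · exact hmA χ h
    · exact hmB χ h
  · rw [char_add_of_isCompl ρ A B hAB, hmA', hmB', Multiset.sum_add]

lemma reg_char {G : Type} [Group G] [Finite G] (g : G) :
    (permRep G G).character g = open Classical in if g = 1 then (Nat.card G : ℂ) else 0 := by
  classical
  have := Fintype.ofFinite G
  split_ifs with h
  · rw [h, char_one, Module.finrank_fintype_fun_eq_card, Nat.card_eq_fintype_card]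
  · change LinearMap.trace ℂ _ (permRep G G g) = 0
    rw [LinearMap.trace_eq_matrix_trace ℂ (Pi.basisFun ℂ G), Matrix.trace]
    refine Finset.sum_eq_zero fun x _ => ?_
    rw [Matrix.diag_apply, LinearMap.toMatrix_apply, Pi.basisFun_repr, Pi.basisFun_apply,
      permRep_apply, Pi.single_apply, if_neg]
    intro h1
    rw [smul_eq_mul, mul_eq_right, inv_eq_one] at h1
    exact h h1

lemma exists_irr_finset (G : Type) [Group G] [Finite G] :
    ∃ S : Finset (G → ℂ), (∀ χ, χ ∈ S ↔ IrrC G χ) ∧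
      ∀ z : G, z ≠ 1 → ∑ χ ∈ S, χ 1 * χ z = 0 := by
  classical
  have := Fintype.ofFinite G
  have hc : (Nat.card G : ℂ) ≠ 0 := Nat.cast_ne_zero.2 Nat.card_pos.ne'
  obtain ⟨m, hm, hsum⟩ := decomp _ _ (permRep G G) rfl
  have hsum' : ∀ g, (permRep G G).character g = ∑ χ ∈ m.toFinset, (m.count χ : ℂ) * χ g := by
    intro g
    rw [hsum, Finset.sum_multiset_count, Finset.sum_apply]
    simp
  have hcount : ∀ ψ, IrrC G ψ → (m.count ψ : ℂ) = ψ 1 := by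
    intro ψ hψ
    have h1 : ∑ g : G, (permRep G G).character g * ψ g⁻¹ = Nat.card G * ψ 1 := by
      rw [Finset.sum_eq_single 1]
      · rw [reg_char, if_pos rfl, inv_one]
      · intro g _ hg
        rw [reg_char, if_neg hg, zero_mul]
      · simp
    have h2 : ∑ g : G, (permRep G G).character g * ψ g⁻¹ = m.count ψ * Nat.card G := by
      simp only [hsum', Finset.sum_mul]
      rw [Finset.sum_comm]
      simp only [mul_assoc, ← Finset.mul_sum]
      by_cases hψm : ψ ∈ m.toFinset
      · rw [Finset.sum_eq_single_of_mem ψ hψm]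
        · rw [irr_orth ψ ψ hψ hψ, if_pos rfl]
        · intro χ hχ hne
          rw [irr_orth χ ψ (hm χ (Multiset.mem_toFinset.1 hχ)) hψ, if_neg hne, mul_zero]
      · rw [Finset.sum_eq_zero, Multiset.count_eq_zero.2 (fun h => hψm (Multiset.mem_toFinset.2 h))]
        · simp
        · intro χ hχ
          rw [irr_orth χ ψ (hm χ (Multiset.mem_toFinset.1 hχ)) hψ, if_neg, mul_zero]
          rintro rfl
          exact hψm hχ
    rw [h1, mul_comm] at h2
    exact (mul_right_cancel₀ hc h2).symm
  refine ⟨m.toFinset, ?_, ?_⟩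
  · intro χ
    refine ⟨fun h => hm χ (Multiset.mem_toFinset.1 h), fun h => ?_⟩
    rw [Multiset.mem_toFinset, ← Multiset.count_ne_zero]
    intro h0
    have h1 := hcount χ h
    rw [h0, Nat.cast_zero] at h1
    obtain ⟨V, _, _, _, ρ, hρ, rfl⟩ := h
    rw [char_one] at h1
    have h2 : Module.finrank ℂ V = 0 := by exact_mod_cast h1.symm
    have h3 := Module.finrank_zero_iff.1 h2
    obtain ⟨a, b, hab⟩ := exists_pair_ne (Subrepresentation ρ)
    apply hab
    apply Subrepresentation.toSubmodule_injective
    exact Subsingleton.elim _ _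
  · intro z hz
    have h1 := hsum' z
    rw [reg_char, if_neg hz] at h1
    rw [h1]
    refine Finset.sum_congr rfl fun χ hχ => ?_
    rw [hcount χ (hm χ (Multiset.mem_toFinset.1 hχ))]

lemma irrC_one (G : Type) [Group G] : IrrC G 1 := by
  refine ⟨ℂ, _, _, inferInstance, Representation.trivial ℂ G ℂ, ?_, ?_⟩
  · exact { exists_pair_ne := ⟨⊥, ⊤, fun h => by
              have h1 : (⊥ : Submodule ℂ ℂ) = ⊤ := congrArg Subrepresentation.toSubmodule h
              exact bot_ne_top h1⟩
            eq_bot_or_eq_top := fun A => by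
              rcases eq_bot_or_eq_top (A.toSubmodule : Ideal ℂ) with h | h
              · exact Or.inl (Subrepresentation.toSubmodule_injective h)
              · exact Or.inr (Subrepresentation.toSubmodule_injective h) }
  · funext g
    change (1 : ℂ) = LinearMap.trace ℂ ℂ LinearMap.id
    rw [LinearMap.trace_id]; simp

lemma simple_class (G : Type) [Group G] [Finite G] [IsSimpleGroup G]
    (hnc : ∃ a b : G, a * b ≠ b * a) (z : G) (hz : z ≠ 1) (q : ℕ) (hq : q.Prime) (C : Finset G)
    (hC : ∀ x, x ∈ C ↔ IsConj z x) (hCq : ∀ r : ℕ, r.Prime → r ∣ C.card → r = q) : False := by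
  classical
  obtain ⟨S, hS, hsum⟩ := exists_irr_finset G
  have hcenter : ¬ (∀ g : G, z * g = g * z) := by
    intro hcen
    have hmem : z ∈ Subgroup.center G := Subgroup.mem_center_iff.2 fun g => (hcen g).symm
    rcases (inferInstance : (Subgroup.center G).Normal).eq_bot_or_eq_top with h | h
    · rw [h, Subgroup.mem_bot] at hmem
      exact hz hmem
    · obtain ⟨a, b, hab⟩ := hnc
      have ha : a ∈ Subgroup.center G := by rw [h]; trivial
      exact hab (Subgroup.mem_center_iff.1 ha b).symm
  have key : ∀ χ ∈ S, χ ≠ 1 → ∃ β : ℂ, IsIntegral ℤ β ∧ χ 1 * χ z = q * β := by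
    intro χ hχ hne
    obtain ⟨V, _, _, _, ρ, hρ, rfl⟩ := (hS χ).1 hχ
    by_cases hqd : q ∣ Module.finrank ℂ V
    · obtain ⟨k, hk⟩ := hqd
      refine ⟨k * ρ.character z, ?_, ?_⟩
      · have : IsIntegral ℤ (k : ℂ) := by
          simpa using isIntegral_algebraMap (R := ℤ) (A := ℂ) (x := (k : ℤ))
        exact this.mul (char_integral ρ z)
      · rw [char_one, hk]; push_cast; ring
    · have hcop : Nat.Coprime C.card (Module.finrank ℂ V) := by
        apply Nat.coprime_of_dvd
        intro r hr h1 h2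
        rw [hCq r hr h1] at h2
        exact hqd h2
      have hd : 0 < Module.finrank ℂ V := by
        rw [Nat.pos_iff_ne_zero]
        intro h
        rw [h] at hqd
        exact hqd (dvd_zero q)
      rcases zero_or_scalar ρ z C hC hcop hd with h | ⟨α, hα⟩
      · exact ⟨0, isIntegral_zero, by rw [h]; simp⟩
      · exfalso
        rcases (MonoidHom.normal_ker ρ).eq_bot_or_eq_top with h | h
        · apply hcenter
          intro g
          apply (MonoidHom.ker_eq_bot_iff ρ).1 h
          rw [map_mul, map_mul]
          ext v
          rw [Module.End.mul_apply, Module.End.mul_apply, hα, hα, map_smul]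
        · have htriv : ∀ g, ρ g = 1 := fun g => by
            have : g ∈ MonoidHom.ker ρ := by rw [h]; trivial
            exact this
          have hchar : ∀ g, ρ.character g = Module.finrank ℂ V := by
            intro g
            rw [← char_one ρ]
            change LinearMap.trace ℂ V (ρ g) = LinearMap.trace ℂ V (ρ 1)
            rw [htriv, htriv]
          have := Fintype.ofFinite G
          have h1 := irr_orth ρ.character 1 ((hS _).1 hχ) (irrC_one G)
          rw [if_neg hne] at h1
          simp only [hchar, Pi.one_apply, mul_one, Finset.sum_const, nsmul_eq_mul] at h1
          rcases mul_eq_zero.1 h1 with h2 | h2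
          · rw [Nat.cast_eq_zero, Finset.card_univ] at h2
            exact Fintype.card_ne_zero h2
          · rw [Nat.cast_eq_zero] at h2
            omega
  have h1S : (1 : G → ℂ) ∈ S := (hS 1).2 (irrC_one G)
  have h0 := hsum z hz
  rw [← Finset.add_sum_erase S _ h1S] at h0
  have hex : ∃ β : ℂ, IsIntegral ℤ β ∧ ∑ χ ∈ S.erase 1, χ 1 * χ z = q * β := by
    have key' : ∀ χ : G → ℂ, ∃ β : ℂ, χ ∈ S.erase 1 → IsIntegral ℤ β ∧ χ 1 * χ z = q * β := by
      intro χ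
      by_cases h : χ ∈ S.erase 1
      · obtain ⟨β, hβ⟩ := key χ (Finset.mem_of_mem_erase h) (Finset.ne_of_mem_erase h)
        exact ⟨β, fun _ => hβ⟩
      · exact ⟨0, fun h' => absurd h' h⟩
    choose β hβ using key'
    refine ⟨∑ χ ∈ S.erase 1, β χ, IsIntegral.sum _ fun χ h => (hβ χ h).1, ?_⟩
    rw [Finset.mul_sum]
    exact Finset.sum_congr rfl fun χ h => (hβ χ h).2
  obtain ⟨β, hβ, hβ'⟩ := hex
  rw [hβ'] at h0
  have hqC : (q : ℂ) ≠ 0 := Nat.cast_ne_zero.2 hq.ne_zero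
  have hβq : β = algebraMap ℚ ℂ (-1 / q) := by
    simp only [Pi.one_apply, mul_one] at h0
    rw [map_div₀, map_neg, map_one, map_natCast, eq_div_iff hqC]
    linear_combination h0
  rw [hβq, isIntegral_algebraMap_iff (algebraMap ℚ ℂ).injective] at hβ
  obtain ⟨k, hk⟩ := IsIntegrallyClosed.isIntegral_iff.1 hβ
  have hqQ : (q : ℚ) ≠ 0 := Nat.cast_ne_zero.2 hq.ne_zero
  rw [eq_div_iff hqQ] at hk
  have hk' : k * (q : ℤ) = -1 := by
    have : ((k * (q : ℤ) : ℤ) : ℚ) = ((-1 : ℤ) : ℚ) := by push_cast; exact hk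
    exact_mod_cast this
  have hdvd : (q : ℤ) ∣ 1 := ⟨-k, by linear_combination hk'⟩
  have : q ∣ 1 := by exact_mod_cast hdvd
  exact hq.one_lt.ne' (Nat.dvd_one.1 this)

lemma burnside_aux (n : ℕ) : ∀ (K : Type) [Group K] [Finite K], Nat.card K = n →
    (∀ p : ℕ, p.Prime → p ∣ Nat.card K → p = 2 ∨ p = 3) → Group.IsSolvable K := by
  classical
  induction n using Nat.strong_induction_on with
  | _ n ih =>
  intro K _ _ hn hK
  by_cases hcomm : ∀ a b : K, a * b = b * a
  · exact Group.isSolvable_of_comm hcomm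
  push Not at hcomm
  by_cases hsimple : ∀ H : Subgroup K, H.Normal → H = ⊥ ∨ H = ⊤
  · exfalso
    have hnt : Nontrivial K := by
      obtain ⟨a, b, hab⟩ := hcomm
      exact ⟨_, _, hab⟩
    have hsg : IsSimpleGroup K := { eq_bot_or_eq_top_of_normal := hsimple }
    have h1 : Nat.card K ≠ 1 := (Finite.one_lt_card (α := K)).ne'
    obtain ⟨p, hp, hpd⟩ := Nat.exists_prime_and_dvd h1
    have hex : ∃ q : ℕ, q.Prime ∧ ∀ r : ℕ, r.Prime → r ∣ Nat.card K → r ≠ p → r = q := by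
      rcases hK p hp hpd with h | h
      · refine ⟨3, Nat.prime_three, fun r hr hrd hne => ?_⟩
        rcases hK r hr hrd with h' | h' <;> omega
      · refine ⟨2, Nat.prime_two, fun r hr hrd hne => ?_⟩
        rcases hK r hr hrd with h' | h' <;> omega
    obtain ⟨q, hq, hqr⟩ := hex
    have := Fact.mk hp
    obtain ⟨P⟩ : Nonempty (Sylow p K) := inferInstance
    have hPnt : Nontrivial (P : Subgroup K) := by
      rw [← Finite.one_lt_card_iff_nontrivial]
      exact lt_of_lt_of_le hp.one_lt (Nat.le_of_dvd Nat.card_pos (P.dvd_card_of_dvd_card hpd))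
    have hcen := P.isPGroup'.center_nontrivial
    obtain ⟨⟨z, hzc⟩, hz1⟩ := exists_ne (1 : Subgroup.center (P : Subgroup K))
    have hfin := Fintype.ofFinite K
    let C : Finset K := Finset.univ.filter (fun x => IsConj (z : K) x)
    have hC : ∀ x, x ∈ C ↔ IsConj (z : K) x := fun x => by simp [C]
    have hle : (P : Subgroup K) ≤ Subgroup.centralizer {(z : K)} := by
      intro x hx
      rw [Subgroup.mem_centralizer_singleton_iff]
      have h2 := Subgroup.mem_center_iff.1 hzc ⟨x, hx⟩
      exact congrArg Subtype.val h2
    have hcard : C.card = (Subgroup.centralizer {(z : K)}).index := by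
      have hset : (C : Set K) = MulAction.orbit (ConjAct K) (z : K) := by
        ext x
        rw [Finset.mem_coe, hC, ConjAct.mem_orbit_conjAct, isConj_comm]
      rw [← Set.ncard_coe_finset, hset, ← MulAction.index_stabilizer]
      rw [ConjAct.stabilizer_eq_centralizer]
      rfl
    refine simple_class K hcomm (z : K) ?_ q hq C hC ?_
    · intro h
      apply hz1
      apply Subtype.ext
      apply Subtype.ext
      exact h
    · intro r hr hrd
      rw [hcard] at hrd
      have h3 : r ∣ (P : Subgroup K).index := hrd.trans (Subgroup.index_dvd_of_le hle)
      refine hqr r hr (h3.trans (Subgroup.index_dvd_card _)) ?_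
      rintro rfl
      exact P.not_dvd_index h3
  · push Not at hsimple
    obtain ⟨H, hHn, hH0, hH1⟩ := hsimple
    have hcard := Subgroup.card_eq_card_quotient_mul_card_subgroup H
    have hHpos : 1 < Nat.card H := by
      rw [Finite.one_lt_card_iff_nontrivial]
      exact (Subgroup.nontrivial_iff_ne_bot H).2 hH0
    have hQpos : 1 < Nat.card (K ⧸ H) := by
      have h4 : H.index ≠ 1 := fun h => hH1 (Subgroup.index_eq_one.1 h)
      have h5 : H.index ≠ 0 := Subgroup.index_ne_zero_of_finite
      change 1 < H.index
      omega
    have hHs : Group.IsSolvable H := by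
      refine ih _ ?_ H rfl fun p hp hpd => hK p hp (hpd.trans (Subgroup.card_subgroup_dvd_card H))
      rw [← hn, hcard]; nlinarith
    have hQs : Group.IsSolvable (K ⧸ H) := by
      refine ih _ ?_ (K ⧸ H) rfl fun p hp hpd =>
        hK p hp (hpd.trans (Subgroup.card_quotient_dvd_card H))
      rw [← hn, hcard]; nlinarith
    refine Group.isSolvable_of_ker_le_range H.subtype (QuotientGroup.mk' H) ?_
    rw [QuotientGroup.ker_mk', Subgroup.range_subtype]

end DegSum


theorem degree_sum_gt_two_ge_five_mul_index_commutator
    (G : Type) [Group G] [Finite G] (hG : ¬ IsSolvable G) :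
    5 * ((commutator G).index : ℝ) ≤ charDegreeSumGtTwo G := by
  exact DegSum.main_of_burnside (fun K _ _ h => DegSum.burnside_aux _ K rfl h) G hG
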